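/- Let c : M → ℝ be a family of coefficients indexed by multi-indices, let 0 < q < ∞, δ > 0 and M₀ ≥ 0. Suppose that for every finitely supported sequence z : ℕ₊ → ℂ with ∑_{α∈M, α≠0} |z^α|² (2ℕ)^{qα} < δ², the series ∑_{α∈M} c_α z^α converges absolutely and satisfies |∑_{α∈M} c_α z^α| ≤ M₀. Then there exists a real number r > 0 such that ∑_{α∈M} c_α² (2ℕ)^{−rα} < ∞. (Characterization theorem: a power series in infinitely many complex variables that converges absolutely and is bounded on the neighborhood B_q(δ) is the Hermite transform of a Kondratiev distribution.) -/

import Mathlib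

/-!
As `s → -∞`, the polydisc `|z_j| ≤ (2j)^s` eventually lies in `B_q(δ)`: its points satisfy
`∑_{α ≠ 0} |z^α|² (2ℕ)^{qα} ≤ ∑_{α ≠ 0} (2ℕ)^{(2s+q)α}`, which tends to `0` by dominated
convergence, since `∑_α (2ℕ)^{pα} = ∏_j (1 - (2j)^p)⁻¹` converges for `p < -1`. Fix such `s < 0`.
The hypothesis holds on the torus with radii `(2j)^s` over the support of any given `α`, and the
Fourier coefficient of frequency `α` of the power series on this torus is `c_α (2ℕ)^{sα}`. Hence
`|c_α| (2ℕ)^{sα} ≤ M₀`, and `∑_α c_α² (2ℕ)^{(2s-2)α} ≤ M₀² ∑_α (2ℕ)^{-2α} < ∞`.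
-/

open scoped BigOperators

/-- A multi-index: a finitely supported function `ℕ₊ → ℕ`. -/
abbrev MultiIndex := ℕ+ →₀ ℕ

/-- For a multi-index `α` and a real number `c`,
`(2ℕ)^{cα} = ∏_j (2j)^{c·α(j)}` (a finite product over the support of `α`). -/
noncomputable def twoNpow (c : ℝ) (α : MultiIndex) : ℝ :=
  α.prod fun j n => (2 * (j : ℝ)) ^ (c * (n : ℝ))

/-- For a finitely supported sequence `z : ℕ₊ → ℂ` and a multi-index `α`,
`z^α = ∏_{j} z(j)^{α(j)}` (a finite product). -/
noncomputable def zpowM (z : ℕ+ →₀ ℂ) (α : MultiIndex) : ℂ :=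
  α.prod fun j n => z j ^ n

open Filter MeasureTheory Topology UnitAddTorus

section GeometricSeries

variable {ι : Type*}

lemma sum_finsupp_prod {M R : Type*} [Zero M] [CommSemiring R] (s : Finset ι)
    (t : ι → Finset M) {f : ι → M → R} (hf : ∀ i ∈ s, f i 0 = 1) :
    ∑ a ∈ s.finsupp t, a.prod f = ∏ i ∈ s, ∑ m ∈ t i, f i m := by
  classical
  calc ∑ a ∈ s.finsupp t, a.prod f
      = ∑ a ∈ s.finsupp t, ∏ i ∈ s, f i (a i) :=
        Finset.sum_congr rfl fun a ha =>
          Finsupp.prod_of_support_subset a (Finset.mem_finsupp_iff.mp ha).1 f hf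
    _ = ∑ p ∈ s.pi t, ∏ i ∈ s.attach, f i (p i i.2) := by
        rw [Finset.finsupp, Finset.sum_map]
        refine Finset.sum_congr (by congr!) fun p _ => ?_
        rw [← Finset.prod_attach s]
        exact Finset.prod_congr rfl fun i _ => by simp [Finsupp.indicator_apply]
    _ = ∏ i ∈ s, ∑ m ∈ t i, f i m := (Finset.prod_sum s t f).symm

lemma exists_subset_finsupp_range (T : Finset (ι →₀ ℕ)) :
    ∃ (s : Finset ι) (b : ι → ℕ), T ⊆ s.finsupp fun i => Finset.range (b i) := by
  classical
  refine ⟨(T.sup id).support, fun i => T.sup id i + 1, fun a ha => ?_⟩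
  have hle : a ≤ T.sup id := Finset.le_sup (f := id) ha
  exact Finset.mem_finsupp_iff.mpr
    ⟨Finsupp.support_mono hle, fun i _ => Finset.mem_range_succ_iff.mpr (hle i)⟩

lemma summable_div_one_sub {x : ι → ℝ} (h0 : ∀ i, 0 ≤ x i) (h1 : ∀ i, x i < 1)
    (hx : Summable x) : Summable fun i => x i / (1 - x i) := by
  refine (hx.mul_left 2).of_norm_bounded_eventually ?_
  filter_upwards [hx.tendsto_cofinite_zero.eventually_le_const (by norm_num : (0 : ℝ) < 1 / 2)]
    with i hi
  have hpos : 0 < 1 - x i := sub_pos.mpr (h1 i)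
  rw [Real.norm_of_nonneg (div_nonneg (h0 i) hpos.le), div_le_iff₀ hpos]
  nlinarith [h0 i]

lemma summable_finsupp_prod_pow {x : ι → ℝ} (h0 : ∀ i, 0 ≤ x i) (h1 : ∀ i, x i < 1)
    (hx : Summable x) : Summable fun a : ι →₀ ℕ => a.prod fun i n => x i ^ n := by
  have hnonneg (a : ι →₀ ℕ) : 0 ≤ a.prod fun i n => x i ^ n :=
    Finset.prod_nonneg fun i _ => pow_nonneg (h0 i) _
  have hy0 (i : ι) : 0 ≤ x i / (1 - x i) := div_nonneg (h0 i) (sub_nonneg.mpr (h1 i).le)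
  have hgeom (i : ι) (N : ℕ) : ∑ n ∈ Finset.range N, x i ^ n ≤ 1 + x i / (1 - x i) := by
    have hne : 1 - x i ≠ 0 := (sub_pos.mpr (h1 i)).ne'
    calc ∑ n ∈ Finset.range N, x i ^ n ≤ ∑' n, x i ^ n :=
          (summable_geometric_of_lt_one (h0 i) (h1 i)).sum_le_tsum _
            fun n _ => pow_nonneg (h0 i) n
      _ = 1 + x i / (1 - x i) := by
          rw [tsum_geometric_of_lt_one (h0 i) (h1 i)]
          field_simp
          ring
  refine summable_of_sum_le (c := Real.exp (∑' i, x i / (1 - x i))) hnonneg fun T => ?_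
  obtain ⟨s, b, hT⟩ := exists_subset_finsupp_range T
  calc ∑ a ∈ T, a.prod (fun i n => x i ^ n)
      ≤ ∑ a ∈ s.finsupp fun i => Finset.range (b i), a.prod (fun i n => x i ^ n) :=
        Finset.sum_le_sum_of_subset_of_nonneg hT fun a _ _ => hnonneg a
    _ = ∏ i ∈ s, ∑ n ∈ Finset.range (b i), x i ^ n :=
        sum_finsupp_prod s _ fun i _ => pow_zero (x i)
    _ ≤ ∏ i ∈ s, (1 + x i / (1 - x i)) :=
        Finset.prod_le_prod (fun i _ => Finset.sum_nonneg fun n _ => pow_nonneg (h0 i) n)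
          fun i _ => hgeom i (b i)
    _ ≤ Real.exp (∑ i ∈ s, x i / (1 - x i)) := Real.prod_one_add_le_exp_sum s hy0
    _ ≤ Real.exp (∑' i, x i / (1 - x i)) :=
        Real.exp_le_exp.mpr ((summable_div_one_sub h0 h1 hx).sum_le_tsum s fun i _ => hy0 i)

end GeometricSeries

section TorusFourier

variable {d E : Type*} [Fintype d] [NormedAddCommGroup E] [NormedSpace ℂ E]

/-- `UnitAddTorus.mFourierCoeff` integrates against this `volume`, a local instance in Mathlib. -/
noncomputable local instance : MeasureSpace UnitAddCircle := ⟨AddCircle.haarAddCircle⟩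

local instance : IsProbabilityMeasure (volume : Measure UnitAddCircle) :=
  inferInstanceAs (IsProbabilityMeasure AddCircle.haarAddCircle)

lemma mFourier_apply (n : d → ℤ) (t : UnitAddTorus d) :
    mFourier n t = ∏ i, fourier (n i) (t i) :=
  rfl

lemma norm_mFourier_apply (n : d → ℤ) (t : UnitAddTorus d) : ‖mFourier n t‖ = 1 := by
  simp only [mFourier_apply, norm_prod, fourier_apply, Circle.norm_coe, Finset.prod_const_one]

lemma integral_mFourier_neg_mul (m n : d → ℤ) [Decidable (m = n)] :
    ∫ t : UnitAddTorus d, mFourier (-n) t * mFourier m t = if m = n then 1 else 0 := by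
  classical
  have h := orthonormal_iff_ite.mp (orthonormal_mFourier (d := d)) n m
  simp only [ContinuousMap.inner_toLp, ← mFourier_neg] at h
  simpa only [mul_comm, eq_comm] using h

lemma norm_mFourierCoeff_le {f : UnitAddTorus d → E} {C : ℝ} (hf : ∀ t, ‖f t‖ ≤ C)
    (n : d → ℤ) : ‖mFourierCoeff f n‖ ≤ C := by
  refine (norm_integral_le_of_norm_le_const (C := C) (.of_forall fun t => ?_)).trans (by simp)
  rw [norm_smul, norm_mFourier_apply, one_mul]
  exact hf t

lemma hasSum_mFourierCoeff_tsum [CompleteSpace E] {ι : Type*} [Countable ι] (e : ι → d → ℤ)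
    {a : ι → E} (ha : Summable fun i => ‖a i‖) (n : d → ℤ) [DecidablePred fun i => e i = n] :
    HasSum (fun i => if e i = n then a i else 0)
      (mFourierCoeff (fun t => ∑' i, mFourier (e i) t • a i) n) := by
  let F (i : ι) (t : UnitAddTorus d) : E := (mFourier (-n) t * mFourier (e i) t) • a i
  have hF_int (i : ι) : Integrable (F i) :=
    Continuous.integrable_of_hasCompactSupport (by fun_prop) (.of_compactSpace _)
  have hF_norm (i : ι) (t : UnitAddTorus d) : ‖F i t‖ = ‖a i‖ := by
    simp only [F, norm_smul, norm_mul, norm_mFourier_apply, one_mul]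
  have hF_coeff (i : ι) : ∫ t, F i t = if e i = n then a i else 0 := by
    rw [integral_smul_const, integral_mFourier_neg_mul, ite_smul, one_smul, zero_smul]
  have hF_tsum (t : UnitAddTorus d) :
      ∑' i, F i t = mFourier (-n) t • ∑' i, mFourier (e i) t • a i := by
    simp only [F, mul_smul]
    refine Summable.tsum_const_smul _ (.of_norm ?_)
    simpa only [norm_smul, norm_mFourier_apply, one_mul] using ha
  have h := hasSum_integral_of_summable_integral_norm hF_int (by simpa [hF_norm] using ha)
  simpa only [hF_coeff, hF_tsum, mFourierCoeff] using h

end TorusFourier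

section Weights

lemma one_lt_two_mul_pnat (j : ℕ+) : (1 : ℝ) < 2 * j := by
  have : (1 : ℝ) ≤ j := Nat.one_le_cast.mpr j.pos
  linarith

lemma twoNpow_pos (c : ℝ) (α : MultiIndex) : 0 < twoNpow c α :=
  Finset.prod_pos fun j _ => by positivity

lemma twoNpow_add (a b : ℝ) (α : MultiIndex) :
    twoNpow (a + b) α = twoNpow a α * twoNpow b α := by
  simp only [twoNpow, Finsupp.prod, ← Finset.prod_mul_distrib]
  refine Finset.prod_congr rfl fun j _ => ?_
  rw [add_mul, Real.rpow_add (by positivity)]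

lemma twoNpow_eq_prod_pow (c : ℝ) (α : MultiIndex) :
    twoNpow c α = α.prod fun j n => ((2 * (j : ℝ)) ^ c) ^ n :=
  Finset.prod_congr rfl fun j _ => Real.rpow_mul_natCast (by positivity) _ _

lemma twoNpow_eq_rpow (c : ℝ) (α : MultiIndex) : twoNpow c α = twoNpow 1 α ^ c := by
  simp only [twoNpow, Finsupp.prod]
  rw [← Real.finsetProd_rpow _ _ fun j _ => by positivity]
  refine Finset.prod_congr rfl fun j _ => ?_
  rw [← Real.rpow_mul (by positivity), one_mul, mul_comm c]

lemma one_lt_twoNpow {c : ℝ} (hc : 0 < c) {α : MultiIndex} (hα : α ≠ 0) : 1 < twoNpow c α := by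
  rw [← Finset.prod_const_one (s := α.support)]
  refine Finset.prod_lt_prod_of_nonempty (fun _ _ => one_pos) (fun j hj => ?_)
    (Finsupp.support_nonempty_iff.mpr hα)
  have : 0 < α j := Nat.pos_of_ne_zero (Finsupp.mem_support_iff.mp hj)
  exact Real.one_lt_rpow (one_lt_two_mul_pnat j) (by positivity)

lemma twoNpow_mono (α : MultiIndex) : Monotone fun c => twoNpow c α := fun a b hab =>
  Finset.prod_le_prod (fun j _ => by positivity) fun j _ =>
    Real.rpow_le_rpow_of_exponent_le (one_lt_two_mul_pnat j).le (by gcongr)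

lemma summable_twoNpow {c : ℝ} (hc : c < -1) : Summable (twoNpow c) := by
  rw [funext (twoNpow_eq_prod_pow c)]
  refine summable_finsupp_prod_pow (fun j => by positivity)
    (fun j => Real.rpow_lt_one_of_one_lt_of_neg (one_lt_two_mul_pnat j) (by linarith)) ?_
  simp only [Real.mul_rpow zero_le_two (Nat.cast_nonneg _)]
  exact ((Real.summable_nat_rpow.mpr hc).comp_injective PNat.coe_injective).mul_left _

lemma tendsto_tsum_twoNpow_atBot :
    Tendsto (fun c => ∑' α : {α : MultiIndex // α ≠ 0}, twoNpow c α.1) atBot (𝓝 0) := by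
  have hpoint (α : {α : MultiIndex // α ≠ 0}) :
      Tendsto (fun c => twoNpow c α.1) atBot (𝓝 0) := by
    rw [funext fun c => twoNpow_eq_rpow c α.1]
    exact tendsto_rpow_atBot_of_base_gt_one _ (one_lt_twoNpow one_pos α.2)
  have hdom : ∀ᶠ c in atBot, ∀ α : {α : MultiIndex // α ≠ 0},
      ‖twoNpow c α.1‖ ≤ twoNpow (-2) α.1 := by
    filter_upwards [eventually_le_atBot (-2)] with c hc α
    rw [Real.norm_of_nonneg (twoNpow_pos c α.1).le]
    exact twoNpow_mono α.1 hc
  simpa only [tsum_zero] using tendsto_tsum_of_dominated_convergence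
    ((summable_twoNpow (by norm_num)).subtype _) hpoint hdom

end Weights

section Monomials

variable {z : ℕ+ →₀ ℂ} {α : MultiIndex}

lemma norm_zpowM (z : ℕ+ →₀ ℂ) (α : MultiIndex) :
    ‖zpowM z α‖ = α.prod fun j n => ‖z j‖ ^ n := by
  simp only [zpowM, Finsupp.prod, norm_prod, norm_pow]

lemma zpowM_ne_zero_iff : zpowM z α ≠ 0 ↔ α.support ⊆ z.support := by
  simp only [zpowM, Finsupp.prod, Finset.prod_ne_zero_iff, Finset.subset_iff]
  refine forall₂_congr fun j hj => ?_
  rw [pow_ne_zero_iff (Finsupp.mem_support_iff.mp hj), Finsupp.mem_support_iff]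

lemma norm_zpowM_le_twoNpow {s : ℝ} (hz : ∀ j, ‖z j‖ ≤ (2 * (j : ℝ)) ^ s) (α : MultiIndex) :
    ‖zpowM z α‖ ≤ twoNpow s α := by
  rw [norm_zpowM, twoNpow_eq_prod_pow]
  exact Finset.prod_le_prod (fun j _ => by positivity) fun j _ =>
    pow_le_pow_left₀ (norm_nonneg _) (hz j) _

/-- The neighbourhood `B_q(δ)` of the origin: the finitely supported `z` with
`∑_{α ≠ 0} |z^α|² (2ℕ)^{qα} < δ²`. Summability is required separately because a divergent real
`tsum` is `0`. -/
def kondratievNhd (q δ : ℝ) : Set (ℕ+ →₀ ℂ) :=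
  {z | (Summable fun α : {α : MultiIndex // α ≠ 0} => ‖zpowM z α.1‖ ^ 2 * twoNpow q α.1) ∧
    ∑' α : {α : MultiIndex // α ≠ 0}, ‖zpowM z α.1‖ ^ 2 * twoNpow q α.1 < δ ^ 2}

lemma eventually_mem_kondratievNhd_of_norm_le (q : ℝ) {δ : ℝ} (hδ : 0 < δ) :
    ∀ᶠ s : ℝ in atBot, ∀ z : ℕ+ →₀ ℂ, (∀ j, ‖z j‖ ≤ (2 * (j : ℝ)) ^ s) → z ∈ kondratievNhd q δ := by
  have hlim : Tendsto (fun s : ℝ => s + s + q) atBot atBot :=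
    tendsto_atBot_add_const_right _ q (tendsto_id.atBot_add_atBot tendsto_id)
  have hsmall : ∀ᶠ s : ℝ in atBot,
      ∑' α : {α : MultiIndex // α ≠ 0}, twoNpow (s + s + q) α.1 < δ ^ 2 :=
    (tendsto_tsum_twoNpow_atBot.comp hlim).eventually_lt_const (pow_pos hδ 2)
  filter_upwards [hlim.eventually_lt_atBot (-1), hsmall] with s hs hsδ z hz
  have hle (α : {α : MultiIndex // α ≠ 0}) :
      ‖zpowM z α.1‖ ^ 2 * twoNpow q α.1 ≤ twoNpow (s + s + q) α.1 := by
    rw [twoNpow_add, twoNpow_add, ← pow_two]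
    have := (twoNpow_pos q α.1).le
    gcongr
    exact norm_zpowM_le_twoNpow hz α.1
  have hdom : Summable fun α : {α : MultiIndex // α ≠ 0} => twoNpow (s + s + q) α.1 :=
    (summable_twoNpow hs).subtype _
  have hsum : Summable fun α : {α : MultiIndex // α ≠ 0} => ‖zpowM z α.1‖ ^ 2 * twoNpow q α.1 :=
    .of_nonneg_of_le (fun α => mul_nonneg (sq_nonneg _) (twoNpow_pos q α.1).le) hle hdom
  exact ⟨hsum, (hsum.tsum_le_tsum hle hdom).trans_lt hsδ⟩

end Monomials

section CauchyEstimate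

/-- The point obtained from `z` by rotating each nonzero coordinate `z j` by the angle `θ j`;
these points form the torus through `z` on which coefficients are extracted. -/
noncomputable def rotate (z : ℕ+ →₀ ℂ) (θ : UnitAddTorus z.support) : ℕ+ →₀ ℂ :=
  Finsupp.indicator z.support fun j hj => fourier 1 (θ ⟨j, hj⟩) * z j

lemma rotate_apply_coe (z : ℕ+ →₀ ℂ) (θ : UnitAddTorus z.support) (j : z.support) :
    rotate z θ j = fourier 1 (θ j) * z j :=
  Finsupp.indicator_of_mem j.2 _

lemma norm_rotate_apply (z : ℕ+ →₀ ℂ) (θ : UnitAddTorus z.support) (j : ℕ+) :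
    ‖rotate z θ j‖ = ‖z j‖ := by
  by_cases hj : j ∈ z.support
  · rw [rotate_apply_coe z θ ⟨j, hj⟩, norm_mul, fourier_apply, Circle.norm_coe, one_mul]
  · rw [rotate, Finsupp.indicator_of_notMem hj, Finsupp.notMem_support_iff.mp hj]

lemma zpowM_rotate (z : ℕ+ →₀ ℂ) (θ : UnitAddTorus z.support) (α : MultiIndex) :
    zpowM (rotate z θ) α = mFourier (fun j : z.support => (α j : ℤ)) θ * zpowM z α := by
  by_cases hα : α.support ⊆ z.support
  · simp only [zpowM]
    rw [Finsupp.prod_of_support_subset _ hα _ fun j _ => pow_zero _,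
      Finsupp.prod_of_support_subset _ hα _ fun j _ => pow_zero _, ← Finset.prod_coe_sort z.support,
      ← Finset.prod_coe_sort z.support, mFourier_apply, ← Finset.prod_mul_distrib]
    refine Finset.prod_congr rfl fun j _ => ?_
    rw [rotate_apply_coe, mul_pow]
    simp [fourier_apply, AddCircle.toCircle_nsmul]
  · have hz : zpowM z α = 0 := not_not.mp (mt zpowM_ne_zero_iff.mp hα)
    have hnorm : ‖zpowM (rotate z θ) α‖ = ‖zpowM z α‖ := by
      simp only [norm_zpowM, norm_rotate_apply]
    rw [hz, mul_zero, ← norm_eq_zero, hnorm, hz, norm_zero]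

variable {E : Type*} [NormedAddCommGroup E] [NormedSpace ℂ E] [CompleteSpace E]

theorem norm_zpowM_smul_le_of_norm_tsum_le {c : MultiIndex → E} {z : ℕ+ →₀ ℂ} {C : ℝ}
    (hsum : Summable fun β => ‖zpowM z β • c β‖)
    (hC : ∀ w : ℕ+ →₀ ℂ, (∀ j, ‖w j‖ = ‖z j‖) → ‖∑' β, zpowM w β • c β‖ ≤ C)
    (α : MultiIndex) : ‖zpowM z α • c α‖ ≤ C := by
  classical
  by_cases hα : zpowM z α = 0
  · rw [hα, zero_smul, norm_zero]
    exact (norm_nonneg _).trans (hC z fun _ => rfl)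
  let freq (β : MultiIndex) (j : z.support) : ℤ := β j
  have heq {β : MultiIndex} (hβ : zpowM z β ≠ 0) (h : freq β = freq α) : β = α := by
    ext j
    by_cases hj : j ∈ z.support
    · exact Nat.cast_injective (congrFun h ⟨j, hj⟩)
    · rw [Finsupp.notMem_support_iff.mp (mt (@zpowM_ne_zero_iff.mp hβ j) hj),
        Finsupp.notMem_support_iff.mp (mt (@zpowM_ne_zero_iff.mp hα j) hj)]
  have hsingle : ∀ β ≠ α, (if freq β = freq α then zpowM z β • c β else 0) = 0 := by
    intro β hβα
    split_ifs with h
    · rw [not_not.mp (mt (heq · h) hβα), zero_smul]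
    · rfl
  have hcoeff := (hasSum_mFourierCoeff_tsum freq hsum (freq α)).unique (hasSum_single α hsingle)
  rw [if_pos rfl] at hcoeff
  rw [← hcoeff]
  refine norm_mFourierCoeff_le (fun θ => ?_) (freq α)
  simpa only [zpowM_rotate, mul_smul] using hC (rotate z θ) (norm_rotate_apply z θ)

lemma norm_coeff_mul_twoNpow_le {c : MultiIndex → E} {s C : ℝ}
    (h : ∀ z : ℕ+ →₀ ℂ, (∀ j, ‖z j‖ ≤ (2 * (j : ℝ)) ^ s) →
      (Summable fun β => ‖zpowM z β • c β‖) ∧ ‖∑' β, zpowM z β • c β‖ ≤ C)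
    (α : MultiIndex) : ‖c α‖ * twoNpow s α ≤ C := by
  have hpos (j : ℕ+) : 0 < (2 * (j : ℝ)) ^ s := by positivity
  let z : ℕ+ →₀ ℂ := Finsupp.indicator α.support fun j _ => (((2 * (j : ℝ)) ^ s : ℝ) : ℂ)
  have hz_mem {j : ℕ+} (hj : j ∈ α.support) : ‖z j‖ = (2 * (j : ℝ)) ^ s := by
    simp only [z, Finsupp.indicator_of_mem hj, Complex.norm_of_nonneg (hpos j).le]
  have hz_le (j : ℕ+) : ‖z j‖ ≤ (2 * (j : ℝ)) ^ s := by
    by_cases hj : j ∈ α.support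
    · exact (hz_mem hj).le
    · simpa only [z, Finsupp.indicator_of_notMem hj, norm_zero] using (hpos j).le
  have hz_pow : ‖zpowM z α‖ = twoNpow s α := by
    rw [norm_zpowM, twoNpow_eq_prod_pow]
    exact Finset.prod_congr rfl fun j hj => by simp only [hz_mem hj]
  rw [← hz_pow, mul_comm, ← norm_smul]
  exact norm_zpowM_smul_le_of_norm_tsum_le (h z hz_le).1
    (fun w hw => (h w fun j => (hw j).trans_le (hz_le j)).2) α

end CauchyEstimate

theorem hermite_transform_characterization_general {E : Type*} [NormedAddCommGroup E]
    [NormedSpace ℂ E] [CompleteSpace E] (c : MultiIndex → E) (q : ℝ) {δ : ℝ} (hδ : 0 < δ) (M₀ : ℝ)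
    (hbound : ∀ z ∈ kondratievNhd q δ,
      (Summable fun α => ‖zpowM z α • c α‖) ∧ ‖∑' α, zpowM z α • c α‖ ≤ M₀) :
    ∃ r : ℝ, 0 < r ∧ Summable fun α => ‖c α‖ ^ 2 * twoNpow (-r) α := by
  obtain ⟨s, hs, hs0⟩ := ((eventually_mem_kondratievNhd_of_norm_le q hδ).and
    (eventually_lt_atBot 0)).exists
  have hcoeff (α : MultiIndex) : ‖c α‖ * twoNpow s α ≤ M₀ :=
    norm_coeff_mul_twoNpow_le (fun z hz => hbound z (hs z hz)) α
  refine ⟨2 - 2 * s, by linarith, ?_⟩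
  refine ((summable_twoNpow (by norm_num : (-2 : ℝ) < -1)).mul_left (M₀ ^ 2)).of_nonneg_of_le
    (fun α => mul_nonneg (sq_nonneg _) (twoNpow_pos _ α).le) fun α => ?_
  calc ‖c α‖ ^ 2 * twoNpow (-(2 - 2 * s)) α
      = (‖c α‖ * twoNpow s α) ^ 2 * twoNpow (-2) α := by
        rw [show -(2 - 2 * s) = s + s + -2 by ring, twoNpow_add, twoNpow_add]
        ring
    _ ≤ M₀ ^ 2 * twoNpow (-2) α := by
        have hs_pos := twoNpow_pos s α
        have := (twoNpow_pos (-2) α).le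
        gcongr
        exact hcoeff α

/-- Characterization theorem: a power series in infinitely many complex variables
that converges absolutely and is bounded on the neighborhood `B_q(δ)` is the
Hermite transform of a Kondratiev distribution. -/
theorem hermite_transform_characterization
    (c : MultiIndex → ℝ) (q : ℝ) (hq : 0 < q) (δ : ℝ) (hδ : 0 < δ)
    (M₀ : ℝ) (hM₀ : 0 ≤ M₀)
    (hbound : ∀ z : ℕ+ →₀ ℂ,
      (Summable fun α : {α : MultiIndex // α ≠ 0} =>
        ‖zpowM z α.1‖ ^ 2 * twoNpow q α.1) →
      (∑' α : {α : MultiIndex // α ≠ 0},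
        ‖zpowM z α.1‖ ^ 2 * twoNpow q α.1) < δ ^ 2 →
      (Summable fun α : MultiIndex => ‖(c α : ℂ) * zpowM z α‖) ∧
        ‖∑' α : MultiIndex, (c α : ℂ) * zpowM z α‖ ≤ M₀) :
    ∃ r : ℝ, 0 < r ∧ Summable fun α : MultiIndex => c α ^ 2 * twoNpow (-r) α := by
  simpa using hermite_transform_characterization_general (fun α => (c α : ℂ)) q hδ M₀
    fun z hz => by simpa only [smul_eq_mul, mul_comm] using hbound z hz.1 hz.2
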